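/- arXiv:1712.00848 — 4 statements merged into one kernel-verified Lean document; each statement's English description precedes it below -/
import Mathlib

section
/- (Relinearization correctness) Let R be a commutative ring, T ≥ 2 an integer, L ≥ 1, and s, s' elements of R. For 0 ≤ i < L let a_i, e_i ∈ R and set b_i = −(s'·a_i + T·e_i) + T^i·s (the key homomorphisms pseudo-encrypting s under s'). Let c_0, c_1 ∈ R and let c_{1,0}, ..., c_{1,L−1} ∈ R satisfy c_1 = Σ_{i<L} T^i·c_{1,i} (a base-T decomposition of c_1). Define c_0^{relin} = c_0 + Σ_{i<L} c_{1,i}·b_i and c_1^{relin} = Σ_{i<L} c_{1,i}·a_i. Then c_0^{relin} + c_1^{relin}·s' = (c_0 + c_1·s) − T·Σ_{i<L} c_{1,i}·e_i. In particular, when T = t, relinearization preserves the decrypted message modulo t while switching the key from s to s'. -/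
/-!
Decryption is linear in the ciphertext, and the relinearized ciphertext is `(c₀, 0)` plus the
combination of the pairs `(bᵢ, aᵢ)` with coefficients `c_{1,i}`. Each such pair decrypts under `s'`
to `Tⁱ·s - T·eᵢ`; the terms `c_{1,i}·Tⁱ·s` recombine to `c₁·s`, and the remaining ones are the
noise.
-/

section Relinearization

variable {R ι : Type*} [CommRing R]

/-- The decryption circuit under the key `s`, which sends a ciphertext `(c₀, c₁)` to `c₀ + c₁ * s`.
It is bundled as a linear map because key switching takes linear combinations of ciphertexts. -/
def decryptionCircuit (s : R) : R × R →ₗ[R] R :=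
  LinearMap.coprod LinearMap.id (LinearMap.mulRight R s)

theorem decryptionCircuit_apply (s : R) (c : R × R) :
    decryptionCircuit s c = c.1 + c.2 * s := rfl

theorem decryptionCircuit_keyHomomorphism (s s' g a η : R) :
    decryptionCircuit s' (-(s' * a + η) + g * s, a) = g * s - η := by
  rw [decryptionCircuit_apply]
  ring

/-- The relinearization of a ciphertext with first component `c₀` whose second component has
digits `d`. The key homomorphisms `k i` are stored as `(bᵢ, aᵢ)`, in the order of the components
of a ciphertext. -/
def relinearize [Fintype ι] (k : ι → R × R) (c₀ : R) (d : ι → R) : R × R :=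
  (c₀ + ∑ i, d i * (k i).1, ∑ i, d i * (k i).2)

theorem relinearize_eq_add_sum_smul [Fintype ι] (k : ι → R × R) (c₀ : R) (d : ι → R) :
    relinearize k c₀ d = (c₀, 0) + ∑ i, d i • k i := by
  ext <;> simp [relinearize, Prod.fst_sum, Prod.snd_sum]

theorem decryptionCircuit_relinearize [Fintype ι] (s : R) (k : ι → R × R) (c₀ : R) (d : ι → R) :
    decryptionCircuit s (relinearize k c₀ d) = c₀ + ∑ i, d i * decryptionCircuit s (k i) := by
  have h_fst : decryptionCircuit s (c₀, 0) = c₀ := by simp [decryptionCircuit_apply]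
  simp only [relinearize_eq_add_sum_smul, map_add, map_sum, map_smul, smul_eq_mul, h_fst]

theorem sum_digit_mul_weight_sub_noise [Fintype ι] (g d e : ι → R) (s t : R) :
    ∑ i, d i * (g i * s - t * e i) = (∑ i, g i * d i) * s - t * ∑ i, d i * e i := by
  rw [Finset.sum_mul, Finset.mul_sum, ← Finset.sum_sub_distrib]
  exact Finset.sum_congr rfl fun i _ => by ring

/-- In BGV the factor `t` of the noise is the plaintext modulus, which may differ from the base `T`
behind the weights `g i = Tⁱ`. -/
theorem relinearization_correct_general [Fintype ι] (g : ι → R) (t s s' : R) (a e b : ι → R)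
    (hb : ∀ i, b i = -(s' * a i + t * e i) + g i * s)
    (c0 c1 : R) (c1d : ι → R) (hc1 : c1 = ∑ i, g i * c1d i) :
    (c0 + ∑ i, c1d i * b i) + (∑ i, c1d i * a i) * s'
      = (c0 + c1 * s) - t * ∑ i, c1d i * e i :=
  calc (c0 + ∑ i, c1d i * b i) + (∑ i, c1d i * a i) * s'
    _ = decryptionCircuit s' (relinearize (fun i => (b i, a i)) c0 c1d) := rfl
    _ = c0 + ∑ i, c1d i * (g i * s - t * e i) := by
      simp only [decryptionCircuit_relinearize, hb, decryptionCircuit_keyHomomorphism]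
    _ = (c0 + c1 * s) - t * ∑ i, c1d i * e i := by
      rw [sum_digit_mul_weight_sub_noise, ← hc1, add_sub_assoc]

end Relinearization

/-- Relinearization correctness: with key homomorphisms
`b i = -(s'·aᵢ + T·eᵢ) + Tⁱ·s` pseudo-encrypting `s` under `s'`, and a base-`T`
decomposition `c₁ = Σᵢ Tⁱ·c_{1,i}`, the relinearized ciphertext
`(c₀ + Σ c_{1,i}·bᵢ, Σ c_{1,i}·aᵢ)` satisfies
`c₀ᵣ + c₁ᵣ·s' = (c₀ + c₁·s) - T·Σ c_{1,i}·eᵢ`. -/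
theorem relinearization_correct {R : Type*} [CommRing R] (T : ℤ) (hT : 2 ≤ T)
    (L : ℕ) (hL : 1 ≤ L) (s s' : R) (a e b : Fin L → R)
    (hb : ∀ i : Fin L, b i = -(s' * a i + T • e i) + (T ^ (i : ℕ)) • s)
    (c0 c1 : R) (c1d : Fin L → R)
    (hc1 : c1 = ∑ i : Fin L, (T ^ (i : ℕ)) • c1d i) :
    (c0 + ∑ i : Fin L, c1d i * b i) + (∑ i : Fin L, c1d i * a i) * s'
      = (c0 + c1 * s) - T • ∑ i : Fin L, c1d i * e i := by
  simp only [zsmul_eq_mul, Int.cast_pow] at hb hc1 ⊢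
  exact relinearization_correct_general (fun i : Fin L => (T : R) ^ (i : ℕ)) T s s' a e b hb
    c0 c1 c1d hc1
end

section
/- (Correctness of the unattended ciphertext-structure change) Let q be a prime, A = (ZMod q)[z]/(z^n + 1), and let B be a commutative (ZMod q)-algebra. Let φ : A → B be a (ZMod q)-linear map, let T ≥ 2 and L ≥ 1 be integers, and let s' ∈ B. Let s ∈ A have coefficient vector (s_0, ..., s_{n−1}) with s_j ∈ ZMod q, so s = Σ_{j<n} s_j·z^j. For 0 ≤ j < n and 0 ≤ i < L, let a_i^{(j)}, e_i^{(j)} ∈ B and set b_i^{(j)} = −(s'·a_i^{(j)} + T·e_i^{(j)}) + T^i·s_j·1_B (pseudo-encryptions of the key coefficients s_j under s'). Let c_0, c_1 ∈ A, and for each j let d_i^{(j)} ∈ B satisfy φ(z^j·c_1) = Σ_{i<L} T^i·d_i^{(j)}. Define C_0 = φ(c_0) + Σ_{j<n} Σ_{i<L} d_i^{(j)}·b_i^{(j)} and C_1 = Σ_{j<n} Σ_{i<L} d_i^{(j)}·a_i^{(j)}. Then C_0 + C_1·s' = φ(c_0 + c_1·s) − T·Σ_{j<n} Σ_{i<L}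 d_i^{(j)}·e_i^{(j)}. -/
open Polynomial

/-!
The phase `x + y * s'` of a pair `(x, y)` is linear in the pair, and the phase of a
pseudo-encryption of `m` is `m` up to `T` times its error. So the combination of the
pseudo-encryptions with coefficients `dᵢⱼ` has as phase the same combination of the messages
`Tⁱ sⱼ`, up to `T` times that of the errors. Since `∑ᵢ Tⁱ dᵢⱼ = φ (zʲ c₁)`, linearity of `φ`
identifies the combination of the messages with `φ (∑ⱼ sⱼ zʲ c₁) = φ (c₁ s)`.
-/

section PseudoEncryption

variable {S B : Type*} [CommRing B]

/-- The first component of the pseudo-encryption of `m` under the key `s'` with mask `a` and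
error `e`; the second component is `a` itself. It is a pseudo-encryption because `m` may be any
element of `B`, not only a small message. -/
def pseudoEncrypt [SMul S B] (T : S) (s' a e m : B) : B :=
  -(s' * a + T • e) + m

theorem pseudoEncrypt_add_mul [SMul S B] (T : S) (s' a e m : B) :
    pseudoEncrypt T s' a e m + a * s' = m - T • e := by
  rw [pseudoEncrypt]
  ring

theorem sum_mul_pseudoEncrypt_add_sum_mul [DistribSMul S B] [SMulCommClass S B B] {ι : Type*}
    (t : Finset ι) (T : S) (s' : B) (d a e m : ι → B) :
    ∑ k ∈ t, d k * pseudoEncrypt T s' (a k) (e k) (m k) + (∑ k ∈ t, d k * a k) * s' =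
      ∑ k ∈ t, d k * m k - T • ∑ k ∈ t, d k * e k := by
  rw [Finset.sum_mul, Finset.smul_sum, ← Finset.sum_add_distrib, ← Finset.sum_sub_distrib]
  refine Finset.sum_congr rfl fun k _ => ?_
  rw [mul_assoc, ← mul_add, pseudoEncrypt_add_mul, mul_sub, mul_smul_comm]

end PseudoEncryption

theorem map_sum_smul_eq_sum_mul_smul_algebraMap {R S M B ι κ : Type*} [Fintype ι] [Fintype κ]
    [CommSemiring R] [AddCommMonoid M] [Module R M] [Semiring B] [Algebra R B]
    [SMul S B] [SMulCommClass S R B] [SMulCommClass S B B]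
    (φ : M →ₗ[R] B) (g : κ → S) (v : ι → M) (d : κ → ι → B)
    (hd : ∀ j, φ (v j) = ∑ i, g i • d i j) (r : ι → R) :
    φ (∑ j, r j • v j) = ∑ j, ∑ i, d i j * (g i • algebraMap R B (r j)) := by
  simp_rw [map_sum, map_smul, hd, Finset.smul_sum, mul_smul_comm, ← Algebra.commutes,
    ← Algebra.smul_def, smul_comm]

theorem adjoinRoot_mk_sum_C_mul_X_pow {R ι : Type*} [CommRing R] (f : R[X]) (t : Finset ι)
    (r : ι → R) (k : ι → ℕ) :
    AdjoinRoot.mk f (∑ j ∈ t, C (r j) * X ^ k j) = ∑ j ∈ t, r j • AdjoinRoot.root f ^ k j := by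
  simp_rw [map_sum, map_mul, map_pow, AdjoinRoot.mk_X, AdjoinRoot.mk_C, Algebra.smul_def,
    AdjoinRoot.algebraMap_eq]

/-- The generators `u` replace the powers of `z`, and the gadget vector `g` replaces the powers
of `T`. -/
theorem structure_change_correct_general {R S A B ι κ : Type*} [Fintype ι] [Fintype κ]
    [CommSemiring R] [NonUnitalNonAssocSemiring A] [Module R A] [SMulCommClass R A A]
    [CommRing B] [Algebra R B] [DistribSMul S B] [SMulCommClass S R B] [SMulCommClass S B B]
    (φ : A →ₗ[R] B) (T : S) (g : κ → S) (s' : B) (u : ι → A) (r : ι → R) (s : A)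
    (hs : s = ∑ j, r j • u j) (a e b : κ → ι → B)
    (hb : ∀ i j, b i j = pseudoEncrypt T s' (a i j) (e i j) (g i • algebraMap R B (r j)))
    (c₀ c₁ : A) (d : κ → ι → B) (hd : ∀ j, φ (c₁ * u j) = ∑ i, g i • d i j) :
    (φ c₀ + ∑ j, ∑ i, d i j * b i j) + (∑ j, ∑ i, d i j * a i j) * s' =
      φ (c₀ + c₁ * s) - T • ∑ j, ∑ i, d i j * e i j := by
  have message : φ (c₁ * s) = ∑ j, ∑ i, d i j * (g i • algebraMap R B (r j)) := by
    rw [← map_sum_smul_eq_sum_mul_smul_algebraMap φ g _ d hd r, hs, Finset.mul_sum]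
    simp_rw [mul_smul_comm]
  have phase := sum_mul_pseudoEncrypt_add_sum_mul (Finset.univ : Finset (ι × κ)) T s'
    (fun p => d p.2 p.1) (fun p => a p.2 p.1) (fun p => e p.2 p.1)
    (fun p => g p.2 • algebraMap R B (r p.1))
  simp only [← hb, Fintype.sum_prod_type] at phase
  rw [add_assoc, phase, map_add, message, add_sub_assoc]

/-- Correctness of the unattended ciphertext-structure change: with
pseudo-encryptions `b_i^{(j)} = -(s'·a_i^{(j)} + T·e_i^{(j)}) + Tⁱ·s_j·1_B` of
the key coefficients `s_j` under `s'`, and base-`T` decompositions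
`φ(zʲ·c₁) = Σ_i Tⁱ·d_i^{(j)}`, the restructured ciphertext
`(C₀, C₁) = (φ(c₀) + ΣΣ d·b, ΣΣ d·a)` satisfies
`C₀ + C₁·s' = φ(c₀ + c₁·s) − T·ΣΣ d·e`. -/
theorem structure_change_correct (q n : ℕ) [Fact q.Prime] (hn : 0 < n)
    {B : Type*} [CommRing B] [Algebra (ZMod q) B]
    (φ : AdjoinRoot (X ^ n + 1 : (ZMod q)[X]) →ₗ[ZMod q] B)
    (T : ℤ) (hT : 2 ≤ T) (L : ℕ) (hL : 1 ≤ L) (s' : B)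
    (sv : Fin n → ZMod q) (s : AdjoinRoot (X ^ n + 1 : (ZMod q)[X]))
    (hs : s = (AdjoinRoot.mk (X ^ n + 1 : (ZMod q)[X]))
      (∑ j : Fin n, C (sv j) * X ^ (j : ℕ)))
    (a e b : Fin L → Fin n → B)
    (hb : ∀ (i : Fin L) (j : Fin n),
      b i j = -(s' * a i j + T • e i j) +
        (T ^ (i : ℕ)) • algebraMap (ZMod q) B (sv j))
    (c0 c1 : AdjoinRoot (X ^ n + 1 : (ZMod q)[X]))
    (d : Fin L → Fin n → B)
    (hd : ∀ j : Fin n,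
      φ ((AdjoinRoot.root (X ^ n + 1 : (ZMod q)[X])) ^ (j : ℕ) * c1) =
        ∑ i : Fin L, (T ^ (i : ℕ)) • d i j) :
    (φ c0 + ∑ j : Fin n, ∑ i : Fin L, d i j * b i j) +
      (∑ j : Fin n, ∑ i : Fin L, d i j * a i j) * s'
      = φ (c0 + c1 * s) - T • ∑ j : Fin n, ∑ i : Fin L, d i j * e i j := by
  simp only [adjoinRoot_mk_sum_C_mul_X_pow, mul_comm _ c1] at hs hd
  exact structure_change_correct_general φ T _ s' _ sv s hs a e b hb c0 c1 d hd
end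

section
/- (Cyclic convolution from negacyclic convolution via pre- and post-processing) Let R be a commutative ring, N a positive integer, and ω an invertible element of R with ω^N = −1. Given x, h : Fin N → R, define the pre-processed sequences x'_i = ω^i·x_i and h'_j = ω^j·h_j, and let y'_k = Σ_{i+j=k} x'_i·h'_j − Σ_{i+j=N+k} x'_i·h'_j be their negacyclic convolution (sums over 0 ≤ i, j < N). Then for every 0 ≤ k < N, the post-processed value ω^{−k}·y'_k equals the cyclic convolution Σ_{(i,j): i+j ≡ k (mod N)} x_i·h_j. -/
/-!
Substituting `ωz` for `z` turns the relation `z ^ N = c` into `z ^ N = c * ω ^ N` and multiplies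
the coefficient of `z ^ k` by `ω ^ k`. When `ω ^ N = -1` it therefore carries `z ^ N = -1` to
`z ^ N = 1`.
-/

open Finset

theorem mod_eq_iff_of_lt_two_mul {m N k : ℕ} (hm : m < 2 * N) (hk : k < N) :
    m % N = k ↔ m = k ∨ m = N + k := by
  rcases lt_or_ge m N with hmN | hNm
  · rw [Nat.mod_eq_of_lt hmN]
    omega
  · rw [Nat.mod_eq_sub_mod hNm, Nat.mod_eq_of_lt (by omega)]
    omega

section Convolution

variable {M A : Type*} [NonUnitalNonAssocSemiring A] {N : ℕ}

/-- The linear (acyclic) convolution of two sequences of length `N`, that is, the `n`-th coefficient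
of the product of the associated polynomials. It is indexed by all of `ℕ` and vanishes for
`2 * N - 1 ≤ n`. -/
def linearConv (x h : Fin N → A) (n : ℕ) : A :=
  ∑ ij : Fin N × Fin N with (ij.1 : ℕ) + ij.2 = n, x ij.1 * h ij.2

/-- The constacyclic convolution with constant `c`, that is, the `k`-th coefficient of the product
of the associated polynomials modulo `z ^ N - c`. The constants `1` and `-1` give the cyclic and
the negacyclic convolution. Scalars and entries have separate types, so that the entries may lie in
an algebra. -/
def constacyclicConv [SMul M A] (c : M) (x h : Fin N → A) (k : Fin N) : A :=
  linearConv x h k + c • linearConv x h (N + k)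

theorem constacyclicConv_one [Monoid M] [MulAction M A] (x h : Fin N → A) (k : Fin N) :
    constacyclicConv (1 : M) x h k =
      ∑ ij : Fin N × Fin N with ((ij.1 : ℕ) + ij.2) % N = k, x ij.1 * h ij.2 := by
  have mod_iff (ij : Fin N × Fin N) :
      ((ij.1 : ℕ) + ij.2) % N = k ↔ (ij.1 : ℕ) + ij.2 = k ∨ (ij.1 : ℕ) + ij.2 = N + k :=
    mod_eq_iff_of_lt_two_mul (by omega) k.isLt
  have wrap_disjoint : Disjoint (univ.filter fun ij : Fin N × Fin N => (ij.1 : ℕ) + ij.2 = k)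
      (univ.filter fun ij => (ij.1 : ℕ) + ij.2 = N + k) :=
    disjoint_filter.2 fun ij _ hk hNk => by omega
  simp only [constacyclicConv, linearConv, one_smul, mod_iff, filter_or, sum_union wrap_disjoint]

theorem linearConv_pow_smul [Monoid M] [DistribMulAction M A] [IsScalarTower M A A]
    [SMulCommClass M A A] (ω : M) (x h : Fin N → A) (n : ℕ) :
    linearConv (fun i => ω ^ (i : ℕ) • x i) (fun j => ω ^ (j : ℕ) • h j) n =
      ω ^ n • linearConv x h n := by
  rw [linearConv, linearConv, smul_sum]
  refine sum_congr rfl fun ij hij => ?_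
  rw [smul_mul_smul_comm, ← pow_add, (mem_filter.1 hij).2]

variable [CommMonoid M] [DistribMulAction M A] [IsScalarTower M A A] [SMulCommClass M A A]

theorem constacyclicConv_pow_smul (c ω : M) (x h : Fin N → A) (k : Fin N) :
    constacyclicConv c (fun i => ω ^ (i : ℕ) • x i) (fun j => ω ^ (j : ℕ) • h j) k =
      ω ^ (k : ℕ) • constacyclicConv (c * ω ^ N) x h k := by
  simp only [constacyclicConv, linearConv_pow_smul, smul_add, smul_smul, pow_add]
  rw [← mul_assoc, mul_comm (c * ω ^ N)]

theorem cyclic_from_negacyclic_general {c : M} {ω : Mˣ} (hω : c * (ω : M) ^ N = 1)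
    (x h : Fin N → A) (k : Fin N) :
    ((ω⁻¹ : Mˣ) : M) ^ (k : ℕ) •
        constacyclicConv c (fun i => (ω : M) ^ (i : ℕ) • x i) (fun j => (ω : M) ^ (j : ℕ) • h j) k =
      ∑ ij : Fin N × Fin N with ((ij.1 : ℕ) + ij.2) % N = k, x ij.1 * h ij.2 := by
  rw [constacyclicConv_pow_smul, hω, smul_smul, ← mul_pow, Units.inv_mul, one_pow, one_smul,
    constacyclicConv_one]

end Convolution

/-- Cyclic convolution from negacyclic convolution via pre- and post-processing:
if `ω` is an invertible element with `ω^N = -1`, pre-processing `x'ᵢ = ωⁱxᵢ`,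
`h'ⱼ = ωʲhⱼ`, taking the negacyclic convolution `y'`, and post-processing by
`ω^{-k}` yields the cyclic convolution of `x` and `h`. -/
theorem cyclic_from_negacyclic {R : Type*} [CommRing R] (N : ℕ) (hN : 0 < N)
    (ω : Rˣ) (hω : (ω : R) ^ N = -1) (x h : Fin N → R) :
    ∀ k : Fin N,
      ((ω⁻¹ : Rˣ) : R) ^ (k : ℕ) *
        ((∑ ij ∈ Finset.univ.filter
            (fun ij : Fin N × Fin N => (ij.1 : ℕ) + (ij.2 : ℕ) = (k : ℕ)),
            ((ω : R) ^ (ij.1 : ℕ) * x ij.1) * ((ω : R) ^ (ij.2 : ℕ) * h ij.2))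
         - ∑ ij ∈ Finset.univ.filter
            (fun ij : Fin N × Fin N => (ij.1 : ℕ) + (ij.2 : ℕ) = N + (k : ℕ)),
            ((ω : R) ^ (ij.1 : ℕ) * x ij.1) * ((ω : R) ^ (ij.2 : ℕ) * h ij.2))
      = ∑ ij ∈ Finset.univ.filter
          (fun ij : Fin N × Fin N => ((ij.1 : ℕ) + (ij.2 : ℕ)) % N = (k : ℕ)),
          x ij.1 * h ij.2 := by
  intro k
  have neg_one_mul_pow : (-1 : R) * (ω : R) ^ N = 1 := by rw [hω, neg_mul_neg, one_mul]
  simpa only [constacyclicConv, linearConv, smul_eq_mul, neg_one_mul, ← sub_eq_add_neg] using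
    cyclic_from_negacyclic_general neg_one_mul_pow x h k
end

section
/- (NTT inversion formula) Let R be a commutative ring, N a positive integer, and α ∈ R with α^N = 1 such that N·1 is invertible in R and α^i − 1 is invertible in R for every 1 ≤ i ≤ N − 1. Define the NTT of x : Fin N → R by X_k = Σ_{l<N} x_l·α^{lk} and the INTT of X by (N·1)^{−1}·Σ_{k<N} X_k·α^{−lk}. Then for every x : Fin N → R and every 0 ≤ l' < N, (N·1)^{−1}·Σ_{k<N} (Σ_{l<N} x_l·α^{lk})·α^{−l'k} = x_{l'}; i.e., the INTT inverts the NTT. -/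
/-!
Up to the factor `1 / N`, the composite of the two transforms has coefficients
`∑ₖ (α ^ (l - l')) ^ k`. For `l = l'` this sum is `N`; otherwise, since `α ^ N = 1`, the ratio is
some `r = α ^ i` with `0 < i < N`, and the telescoping identity
`(r - 1) * ∑ₖ r ^ k = r ^ N - 1 = 0` lets the regular factor `r - 1` be cancelled.
-/

/-- The number-theoretic transform of a vector `x` at `α`. The entries of `x` are taken in a module
over the ring containing `α`, so that scalars act from the left in the noncommutative case. -/
def ntt {R M : Type*} [Semiring R] [AddCommMonoid M] [Module R M] {N : ℕ} (α : R)
    (x : Fin N → M) (k : Fin N) : M :=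
  ∑ l : Fin N, α ^ ((l : ℕ) * (k : ℕ)) • x l

/-- The inverse number-theoretic transform of a vector `X` at `α`. Both inverses are
`Ring.inverse`, which is `0` at a non-unit. -/
noncomputable def intt {R M : Type*} [Semiring R] [AddCommMonoid M] [Module R M] {N : ℕ} (α : R)
    (X : Fin N → M) (l : Fin N) : M :=
  Ring.inverse (N : R) • ∑ k : Fin N, Ring.inverse α ^ ((l : ℕ) * (k : ℕ)) • X k

section Orthogonality

variable {R : Type*} [Ring R] {N : ℕ}

theorem geom_sum_eq_zero_of_isLeftRegular {r : R} (hr : r ^ N = 1) (hreg : IsLeftRegular (r - 1)) :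
    ∑ k ∈ Finset.range N, r ^ k = 0 :=
  hreg.mul_left_eq_zero_iff.mp (by rw [mul_geom_sum, hr, sub_self])

theorem exists_pow_eq_zpow_of_not_dvd {G : Type*} [Group G] {g : G} (hN : 0 < N) (hg : g ^ N = 1)
    {m : ℤ} (hm : ¬(N : ℤ) ∣ m) : ∃ i : ℕ, 0 < i ∧ i < N ∧ g ^ i = g ^ m := by
  have hN' : (0 : ℤ) < N := mod_cast hN
  have hmod_ne : m % N ≠ 0 := fun h => hm (Int.dvd_of_emod_eq_zero h)
  have hmod_lt : m % N < N := Int.emod_lt_of_pos m hN'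
  obtain ⟨i, hi⟩ := Int.eq_ofNat_of_zero_le (Int.emod_nonneg m hN'.ne')
  refine ⟨i, by omega, by omega, ?_⟩
  rw [zpow_eq_zpow_emod' m hg, hi, zpow_natCast]

variable {u : Rˣ}

theorem geom_sum_zpow_eq_zero (hN : 0 < N) (hu : u ^ N = 1)
    (hreg : ∀ i : ℕ, 0 < i → i < N → IsLeftRegular ((u : R) ^ i - 1))
    {m : ℤ} (hm : ¬(N : ℤ) ∣ m) : ∑ k ∈ Finset.range N, ((u ^ m : Rˣ) : R) ^ k = 0 := by
  obtain ⟨i, hi, hiN, hum⟩ := exists_pow_eq_zpow_of_not_dvd hN hu hm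
  have hroot : ((u : R) ^ i) ^ N = 1 := by
    rw [pow_right_comm, ← Units.val_pow_eq_pow_val, hu, Units.val_one, one_pow]
  rw [← hum, Units.val_pow_eq_pow_val]
  exact geom_sum_eq_zero_of_isLeftRegular hroot (hreg i hi hiN)

theorem sum_inv_pow_mul_pow_eq_ite (hu : u ^ N = 1)
    (hreg : ∀ i : ℕ, 0 < i → i < N → IsLeftRegular ((u : R) ^ i - 1)) (l l' : Fin N) :
    ∑ k : Fin N, (↑u⁻¹ : R) ^ ((l' : ℕ) * (k : ℕ)) * (u : R) ^ ((l : ℕ) * (k : ℕ)) =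
      if l = l' then (N : R) else 0 := by
  have hterm (k : ℕ) : (↑u⁻¹ : R) ^ ((l' : ℕ) * k) * (u : R) ^ ((l : ℕ) * k) =
      ((u ^ ((l : ℤ) - (l' : ℤ)) : Rˣ) : R) ^ k := by
    have hunits : u⁻¹ ^ ((l' : ℕ) * k) * u ^ ((l : ℕ) * k) = (u ^ ((l : ℤ) - (l' : ℤ))) ^ k := by
      group
    simpa only [Units.val_mul, Units.val_pow_eq_pow_val] using congrArg Units.val hunits
  simp only [hterm]
  rw [Fin.sum_univ_eq_sum_range fun k => ((u ^ ((l : ℤ) - (l' : ℤ)) : Rˣ) : R) ^ k]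
  split_ifs with hl
  · simp [hl]
  · refine geom_sum_zpow_eq_zero l.pos hu hreg fun hdvd => hl ?_
    exact Fin.ext ((Nat.modEq_iff_dvd.mpr hdvd).eq_of_lt_of_lt l'.isLt l.isLt).symm

theorem sum_inv_pow_smul_ntt {M : Type*} [AddCommMonoid M] [Module R M] (hu : u ^ N = 1)
    (hreg : ∀ i : ℕ, 0 < i → i < N → IsLeftRegular ((u : R) ^ i - 1))
    (x : Fin N → M) (l' : Fin N) :
    ∑ k : Fin N, (↑u⁻¹ : R) ^ ((l' : ℕ) * (k : ℕ)) • ntt (u : R) x k = (N : R) • x l' := by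
  simp only [ntt, Finset.smul_sum, smul_smul]
  rw [Finset.sum_comm]
  simp only [← Finset.sum_smul, sum_inv_pow_mul_pow_eq_ite hu hreg, ite_smul, zero_smul,
    Finset.sum_ite_eq', Finset.mem_univ, if_true]

end Orthogonality

theorem ntt_inversion_general {R M : Type*} [Ring R] [AddCommMonoid M] [Module R M] {N : ℕ}
    {α : R} (hα : α ^ N = 1) (hN : IsUnit (N : R))
    (hreg : ∀ i : ℕ, 0 < i → i < N → IsLeftRegular (α ^ i - 1)) (x : Fin N → M) :
    intt α (ntt α x) = x := by
  funext l'
  obtain ⟨u, rfl⟩ : IsUnit α := .of_pow_eq_one hα l'.pos.ne'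
  have hu : u ^ N = 1 := Units.ext (by simpa using hα)
  rw [intt, Ring.inverse_unit, sum_inv_pow_smul_ntt hu hreg, smul_smul,
    Ring.inverse_mul_cancel _ hN, one_smul]

/-- NTT inversion formula: if `α^N = 1`, `N·1` is invertible and `αⁱ - 1` is
invertible for `1 ≤ i ≤ N - 1`, then the INTT inverts the NTT:
`(N·1)⁻¹ · Σ_k (Σ_l x_l·α^{lk}) · α^{-l'k} = x_{l'}`. -/
theorem ntt_inversion {R : Type*} [CommRing R] (N : ℕ) (hN : 0 < N) (α : R)
    (hα : α ^ N = 1) (hNunit : IsUnit (N : R))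
    (hprim : ∀ i : ℕ, 1 ≤ i → i ≤ N - 1 → IsUnit (α ^ i - 1))
    (x : Fin N → R) (l' : Fin N) :
    Ring.inverse (N : R) *
      ∑ k : Fin N, (∑ l : Fin N, x l * α ^ ((l : ℕ) * (k : ℕ))) *
        (Ring.inverse α) ^ ((l' : ℕ) * (k : ℕ))
      = x l' := by
  simpa only [intt, ntt, smul_eq_mul, mul_comm] using congrFun (ntt_inversion_general hα hNunit
    (fun i hi hiN => (hprim i hi (Nat.le_sub_one_of_lt hiN)).isRegular.left) x) l'
end
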